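/- arXiv:1206.0725 — 2 statements merged into one kernel-verified Lean document; each statement's English description precedes it below -/
import Mathlib

section
/- Let D ⊊ ℂ be a nonempty open simply connected domain, let w ∈ D, and let f be a holomorphic bijection from the open unit disc 𝔻 = {z ∈ ℂ : |z| < 1} onto D with f(0) = w and f'(0) = c a positive real number (so c = CR(w,D) is the conformal radius). Then: (i) dist(w, ∂D) ≤ c; (ii) c ≤ 4·dist(w, ∂D); and (iii) for any r > 0, if D ⊆ {z : |z − w| < r} then c ≤ r. In other words, dist(w,∂D) ≤ CR(w,D) ≤ min(4·dist(w,∂D), rad(w,D)), where rad(w,D) = inf{r : D ⊆ B(w,r)}. -/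
open Metric Set

section Koebe
open MeasureTheory Real

lemma k_open {f : ℂ → ℂ} (hf : DifferentiableOn ℂ f (ball (0 : ℂ) 1))
    (hi : InjOn f (ball 0 1)) {U : Set ℂ} (hU : IsOpen U) (hUs : U ⊆ ball 0 1) :
    IsOpen (f '' U) := by
  rcases (hf.analyticOnNhd isOpen_ball).is_constant_or_isOpen
    (convex_ball (0:ℂ) 1).isPreconnected with h | h
  · obtain ⟨w, hw⟩ := h
    exfalso
    have h0 : (0:ℂ) ∈ ball (0:ℂ) 1 := by simp
    have h1 : (1/2:ℂ) ∈ ball (0:ℂ) 1 := by simp; norm_num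
    have := hi h0 h1 ((hw _ h0).trans (hw _ h1).symm)
    norm_num at this
  · exact h U hUs hU

def kAnn (a b : ℝ) : Set ℂ := {z | a < ‖z‖ ∧ ‖z‖ < b}

lemma kAnn_open (a b : ℝ) : IsOpen (kAnn a b) :=
  (isOpen_lt continuous_const continuous_norm).inter (isOpen_lt continuous_norm continuous_const)

lemma k_polar {a b : ℝ} (ha : 0 < a) {F : ℂ → ℝ} (hF : ContinuousOn F (kAnn a b)) :
    ∫⁻ z in kAnn a b, ENNReal.ofReal (F z) =
      ∫⁻ r in Ioo a b, ENNReal.ofReal r *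
        ∫⁻ θ in Ioo (-π) π, ENNReal.ofReal (F (circleMap 0 r θ)) := by
  classical
  have hA := (kAnn_open a b).measurableSet
  have hm : Measurable ((kAnn a b).indicator (fun z => ENNReal.ofReal (F z))) := by
    have : (kAnn a b).indicator (fun z => ENNReal.ofReal (F z)) =
      fun z => ENNReal.ofReal ((kAnn a b).piecewise F (fun _ => 0) z) := by
      ext z
      by_cases hz : z ∈ kAnn a b <;> simp [hz]
    rw [this]
    exact ENNReal.measurable_ofReal.comp
      (hF.measurable_piecewise continuousOn_const hA)
  have hcm : ∀ r θ : ℝ, Complex.polarCoord.symm (r, θ) = circleMap 0 r θ := by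
    intro r θ
    simp [Complex.polarCoord_symm_apply, circleMap, Complex.exp_mul_I]
  rw [← lintegral_indicator hA, ← Complex.lintegral_comp_polarCoord_symm, polarCoord_target,
    Measure.volume_eq_prod, ← Measure.prod_restrict, lintegral_prod]
  · simp only [hcm, smul_eq_mul]
    have hsub : Ioo a b ⊆ Ioi (0:ℝ) := fun x hx => ha.trans hx.1
    rw [← lintegral_indicator measurableSet_Ioi, ← lintegral_indicator measurableSet_Ioo]
    congr 1
    ext r
    by_cases hr : r ∈ Ioo a b
    · have hr0 : (0:ℝ) < r := ha.trans hr.1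
      rw [indicator_of_mem (hsub hr), indicator_of_mem hr,
        lintegral_const_mul' _ _ ENNReal.ofReal_ne_top]
      congr 2
      ext θ
      rw [indicator_of_mem]
      simp [kAnn, abs_of_pos hr0, hr.1, hr.2]
    · rw [indicator_of_notMem hr]
      by_cases h0 : r ∈ Ioi (0:ℝ)
      · rw [indicator_of_mem h0]
        have : ∀ θ, circleMap 0 r θ ∉ kAnn a b := by
          intro θ h
          simp only [kAnn, mem_ofPred_eq, norm_circleMap_zero, abs_of_pos (mem_Ioi.1 h0)] at h
          exact hr h
        simp [this]
      · rw [indicator_of_notMem h0]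
  · refine Measurable.aemeasurable ?_
    have hp : Measurable (fun p : ℝ × ℝ => Complex.polarCoord.symm p) := by
      simp only [Complex.polarCoord_symm_apply]
      fun_prop
    exact (ENNReal.measurable_ofReal.comp measurable_fst).mul (hm.comp hp)

lemma k_log {a b : ℝ} (ha : 0 < a) (hab : a ≤ b) :
    ∫⁻ r in Ioo a b, ENNReal.ofReal r * ENNReal.ofReal (2 * π / r ^ 2) =
      ENNReal.ofReal (2 * π * log (b / a)) := by
  have h1 : ∀ r ∈ Ioo a b, ENNReal.ofReal r * ENNReal.ofReal (2 * π / r ^ 2) =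
      ENNReal.ofReal (2 * π * r⁻¹) := by
    intro r hr
    have hr0 : (0:ℝ) < r := ha.trans hr.1
    rw [← ENNReal.ofReal_mul hr0.le]
    congr 1
    field_simp
  rw [setLIntegral_congr_fun measurableSet_Ioo h1, ← integral_inv_of_pos ha (ha.trans_le hab),
    ← intervalIntegral.integral_const_mul, intervalIntegral.integral_of_le hab,
    integral_Ioc_eq_integral_Ioo, ofReal_integral_eq_lintegral_ofReal]
  · have : IntervalIntegrable (fun r : ℝ => 2 * π * r⁻¹) volume a b := by
      apply ContinuousOn.intervalIntegrable
      apply ContinuousOn.mul continuousOn_const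
      apply continuousOn_inv₀.mono
      intro x hx
      rw [uIcc_of_le hab] at hx
      exact (ha.trans_le hx.1).ne'
    exact this.1.mono_set Ioo_subset_Ioc_self
  · filter_upwards [ae_restrict_mem measurableSet_Ioo] with r hr
    have hr0 : (0:ℝ) < r := ha.trans hr.1
    simp only [Pi.zero_apply]; positivity

lemma k_annArea {a b : ℝ} (ha : 0 < a) (hab : a ≤ b) :
    ∫⁻ z in kAnn a b, ENNReal.ofReal (1 / ‖z‖ ^ 2) = ENNReal.ofReal (2 * π * log (b / a)) := by
  rw [k_polar ha, ← k_log ha hab]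
  · apply setLIntegral_congr_fun measurableSet_Ioo
    intro r hr
    have hr0 : (0:ℝ) < r := ha.trans hr.1
    simp only [norm_circleMap_zero, sq_abs, setLIntegral_const, Real.volume_Ioo]
    rw [← ENNReal.ofReal_mul (by positivity)]
    congr 2
    ring
  · apply ContinuousOn.div continuousOn_const (by fun_prop)
    intro z hz
    have := ha.trans hz.1
    positivity

lemma k_area {f : ℂ → ℂ} {s : Set ℂ} (hs : IsOpen s) (hf : DifferentiableOn ℂ f s)
    (hi : InjOn f s) :
    ∫⁻ z in f '' s, ENNReal.ofReal (1 / ‖z‖ ^ 2) =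
      ∫⁻ z in s, ENNReal.ofReal (‖deriv f z / f z‖ ^ 2) := by
  have hd : ∀ x ∈ s, HasFDerivWithinAt f
      ((ContinuousLinearMap.toSpanSingleton ℂ (deriv f x)).restrictScalars ℝ) s x := by
    intro x hx
    have h := ((hf x hx).differentiableAt (hs.mem_nhds hx)).hasDerivAt
    exact (h.hasFDerivAt.restrictScalars ℝ).hasFDerivWithinAt
  rw [lintegral_image_eq_lintegral_abs_det_fderiv_mul volume hs.measurableSet hd hi]
  apply setLIntegral_congr_fun hs.measurableSet
  intro z hz
  simp only
  rw [← ENNReal.ofReal_mul (abs_nonneg _)]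
  congr 1
  have : ((ContinuousLinearMap.toSpanSingleton ℂ (deriv f z)).restrictScalars ℝ).det
      = ‖deriv f z‖ ^ 2 := by
    simp [ContinuousLinearMap.det, LinearMap.det_restrictScalars, Algebra.norm_complex_eq,
      Complex.normSq_eq_norm_sq]
  rw [this, abs_of_nonneg (by positivity), norm_div]
  ring

lemma k_h {f : ℂ → ℂ} (hf : DifferentiableOn ℂ f (ball (0 : ℂ) 1))
    (hi : InjOn f (ball 0 1)) (h' : deriv f 0 ≠ 0) :
    DifferentiableOn ℂ (dslope f 0) (ball 0 1) ∧ ∀ z ∈ ball (0:ℂ) 1, dslope f 0 z ≠ 0 := by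
  refine ⟨(Complex.differentiableOn_dslope (ball_mem_nhds _ one_pos)).2 hf, fun z hz h0 => ?_⟩
  by_cases hz0 : z = 0
  · subst hz0
    exact h' (by simpa using h0)
  · rw [dslope_of_ne _ hz0, slope_def_field, div_eq_zero_iff, sub_eq_zero, sub_zero] at h0
    rcases h0 with h0 | h0
    · exact hz0 (hi hz (by simp) h0)
    · exact hz0 h0

lemma k_circle {f : ℂ → ℂ} (hf : DifferentiableOn ℂ f (ball (0 : ℂ) 1))
    (hi : InjOn f (ball 0 1)) (h' : deriv f 0 ≠ 0) (hf0 : f 0 = 0) {r : ℝ} (hr : 0 < r)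
    (hr1 : r < 1) :
    ENNReal.ofReal (2 * π / r ^ 2) ≤ ∫⁻ θ in Ioo (-π) π,
      ENNReal.ofReal (‖deriv f (circleMap 0 r θ) / f (circleMap 0 r θ)‖ ^ 2) := by
  obtain ⟨hh, hne⟩ := k_h hf hi h'
  set h := dslope f 0 with hh_def
  have hfh : ∀ z, f z = z * h z := by
    intro z
    have := sub_smul_dslope f 0 z
    simp only [sub_zero, hf0, smul_eq_mul] at this
    exact this.symm
  set G : ℂ → ℂ := fun z => 1 + z * deriv h z / h z with hG
  have hGd : DifferentiableOn ℂ G (ball 0 1) := by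
    apply DifferentiableOn.const_add
    exact (differentiableOn_id.mul (hh.deriv isOpen_ball)).div hh hne
  have hGf : ∀ z ∈ ball (0:ℂ) 1, z ≠ 0 → deriv f z / f z = G z / z := by
    intro z hz hz0
    have hd : HasDerivAt f (1 * h z + z * deriv h z) z := by
      have h2 := ((hh z hz).differentiableAt (isOpen_ball.mem_nhds hz)).hasDerivAt
      have := (hasDerivAt_id z).mul h2
      have e : f = id * h := by ext x; simp [hfh x]
      rw [e]; exact this
    rw [hd.deriv, hfh z]
    have := hne z hz
    simp only [hG]
    field_simp
  have hmem : ∀ θ, circleMap 0 r θ ∈ ball (0:ℂ) 1 := by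
    intro θ; simp [abs_of_pos hr, hr1]
  have hcont : Continuous (fun θ => G (circleMap 0 r θ)) :=
    hGd.continuousOn.comp_continuous (continuous_circleMap 0 r) hmem
  have hmean : ∫ θ in (-π)..π, G (circleMap 0 r θ) = 2 * π := by
    have hdc : DiffContOnCl ℂ G (ball 0 |r|) := by
      apply DifferentiableOn.diffContOnCl
      apply hGd.mono
      rw [abs_of_pos hr]
      exact closure_ball_subset_closedBall.trans (closedBall_subset_ball hr1)
    have h1 := hdc.circleAverage
    rw [circleAverage_def] at h1
    have h2 : G 0 = 1 := by simp [hG]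
    rw [h2] at h1
    have hp : Function.Periodic (fun θ => G (circleMap 0 r θ)) (2 * π) := by
      intro θ; simp only [periodic_circleMap 0 r θ]
    have h3 := hp.intervalIntegral_add_eq (-π) 0
    rw [show -π + 2 * π = π by ring, zero_add] at h3
    rw [h3]
    rw [Complex.real_smul] at h1
    have hpi : (π : ℂ) ≠ 0 := by exact_mod_cast Real.pi_ne_zero
    push_cast at h1
    field_simp at h1
    rw [h1]
  have hreal : ∫ θ in (-π)..π, (2 * (G (circleMap 0 r θ)).re - 1) / r ^ 2 = 2 * π / r ^ 2 := by
    have hre : ∫ θ in (-π)..π, (G (circleMap 0 r θ)).re = 2 * π := by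
      have := Complex.reCLM.intervalIntegral_comp_comm (hcont.intervalIntegrable (-π) π)
        (μ := volume)
      simp only [Complex.reCLM_apply] at this
      rw [this, hmean]
      simp
    have hc2 : Continuous (fun θ => (G (circleMap 0 r θ)).re) := Complex.continuous_re.comp hcont
    rw [intervalIntegral.integral_div, intervalIntegral.integral_sub
      ((hc2.const_mul 2).intervalIntegrable _ _) (by simp),
      intervalIntegral.integral_const_mul, hre]
    simp
    ring
  have hle : -π ≤ π := by linarith [Real.pi_pos]
  have hc3 : Continuous (fun θ => (2 * (G (circleMap 0 r θ)).re - 1) / r ^ 2) :=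
    (((Complex.continuous_re.comp hcont).const_mul 2).sub continuous_const).div_const _
  have hc4 : Continuous (fun θ => ‖G (circleMap 0 r θ)‖ ^ 2 / r ^ 2) :=
    (hcont.norm.pow 2).div_const _
  have e1 : ∀ θ, ‖deriv f (circleMap 0 r θ) / f (circleMap 0 r θ)‖ ^ 2 =
      ‖G (circleMap 0 r θ)‖ ^ 2 / r ^ 2 := by
    intro θ
    rw [hGf _ (hmem θ) (circleMap_ne_center hr.ne'), norm_div, norm_circleMap_zero, div_pow,
      sq_abs]
  simp only [e1]
  rw [← ofReal_integral_eq_lintegral_ofReal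
    ((hc4.intervalIntegrable (-π) π).1.mono_set Ioo_subset_Ioc_self)
    (Filter.Eventually.of_forall fun θ => by simp only [Pi.zero_apply]; positivity),
    ← integral_Ioc_eq_integral_Ioo, ← intervalIntegral.integral_of_le hle, ← hreal]
  apply ENNReal.ofReal_le_ofReal
  apply intervalIntegral.integral_mono hle (hc3.intervalIntegrable _ _) (hc4.intervalIntegrable _ _)
  intro θ
  simp only
  gcongr
  rw [← Complex.normSq_eq_norm_sq, Complex.normSq_apply]
  nlinarith [sq_nonneg ((G (circleMap 0 r θ)).re - 1), sq_nonneg (G (circleMap 0 r θ)).im]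

lemma k_lower {f : ℂ → ℂ} (hf : DifferentiableOn ℂ f (ball (0 : ℂ) 1))
    (hi : InjOn f (ball 0 1)) (h' : deriv f 0 ≠ 0) (hf0 : f 0 = 0) {e : ℝ} (he : 0 < e)
    (he1 : e < 1) :
    ENNReal.ofReal (2 * π * log (1 / e)) ≤
      ∫⁻ z in kAnn e 1, ENNReal.ofReal (‖deriv f z / f z‖ ^ 2) := by
  have hsub : kAnn e 1 ⊆ ball 0 1 := fun z hz => by simpa using hz.2
  rw [k_polar he, ← k_log he he1.le]
  · apply setLIntegral_mono' measurableSet_Ioo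
    intro r hr
    gcongr
    exact k_circle hf hi h' hf0 (he.trans hr.1) hr.2
  · refine (ContinuousOn.norm ?_).pow 2
    apply ((hf.deriv isOpen_ball).continuousOn.mono hsub).div (hf.continuousOn.mono hsub)
    intro z hz h0
    have : z = 0 := hi (hsub hz) (by simp) (h0.trans hf0.symm)
    have h1 := hz.1
    rw [this, norm_zero] at h1
    linarith

lemma k_cover {f : ℂ → ℂ} (hf : DifferentiableOn ℂ f (ball (0 : ℂ) 1))
    (hi : InjOn f (ball 0 1)) (hf0 : f 0 = 0) {e m : ℝ} (he : 0 < e) (he1 : e < 1) (hm : 0 < m)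
    (h : ∀ z : ℂ, ‖z‖ = e → m ≤ ‖f z‖) : ball 0 m ⊆ f '' ball 0 e := by
  have hsub : ball (0:ℂ) e ⊆ ball 0 1 := ball_subset_ball he1.le
  have hsub' : closedBall (0:ℂ) e ⊆ ball 0 1 := closedBall_subset_ball he1
  have hcl : IsClosed (f '' closedBall 0 e) :=
    ((isCompact_closedBall (0:ℂ) e).image_of_continuousOn (hf.continuousOn.mono hsub')).isClosed
  apply (convex_ball (0:ℂ) m).isPreconnected.subset_left_of_subset_union
    (k_open hf hi isOpen_ball hsub) hcl.isOpen_compl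
  · rw [disjoint_compl_right_iff_subset]
    exact image_mono ball_subset_closedBall
  · intro w hw
    by_cases hw2 : w ∈ f '' closedBall 0 e
    · left
      obtain ⟨z, hz, rfl⟩ := hw2
      refine ⟨z, ?_, rfl⟩
      rw [mem_ball_zero_iff] at hw ⊢
      rw [mem_closedBall_zero_iff] at hz
      rcases hz.lt_or_eq with h1 | h1
      · exact h1
      · exact absurd (h z h1) (not_le.2 hw)
    · right; exact hw2
  · exact ⟨0, by simpa using hm, 0, by simpa using he, hf0⟩

lemma k_main {f : ℂ → ℂ} (hf : DifferentiableOn ℂ f (ball (0 : ℂ) 1))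
    (hi : InjOn f (ball 0 1)) (hf0 : f 0 = 0)
    (hne : ∀ z ∈ ball (0:ℂ) 1, ∀ w ∈ ball (0:ℂ) 1, f z * f w ≠ 1) : ‖deriv f 0‖ ≤ 1 := by
  by_contra! hlt
  have h' : deriv f 0 ≠ 0 := by
    intro h; rw [h, norm_zero] at hlt; linarith
  obtain ⟨hh, hhne⟩ := k_h hf hi h'
  obtain ⟨k, hk1, hk⟩ := exists_between hlt
  have hcont : ContinuousAt (fun z => ‖dslope f 0 z‖) 0 :=
    ((hh.continuousOn).continuousAt (ball_mem_nhds _ one_pos)).norm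
  have hev := hcont.eventually (lt_mem_nhds (a := k) (by simpa using hk))
  obtain ⟨e', he', hball⟩ := Metric.eventually_nhds_iff.1 hev
  obtain ⟨e, he, hee⟩ := exists_between (lt_min he' one_pos)
  have he1 : e < 1 := hee.trans_le (min_le_right _ _)
  have hm : ∀ z : ℂ, ‖z‖ = e → k * e ≤ ‖f z‖ := by
    intro z hz
    have h1 : k < ‖dslope f 0 z‖ := hball (by
      rw [dist_zero_right, hz]; exact hee.trans_le (min_le_left _ _))
    have := sub_smul_dslope f 0 z
    simp only [sub_zero, hf0, smul_eq_mul] at this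
    rw [← this, norm_mul, hz, mul_comm]
    gcongr
  have hke : e < k * e := by nlinarith
  obtain ⟨d, hed, hd⟩ := exists_between (lt_min hke he1)
  have hd0 : 0 < d := he.trans hed
  have hd1 : d < 1 := hd.trans_le (min_le_right _ _)
  have hdk : d < k * e := hd.trans_le (min_le_left _ _)
  have hcov := k_cover hf hi hf0 he he1 (he.trans hke) hm
  have hsub : kAnn e 1 ⊆ ball 0 1 := fun z hz => by simpa using hz.2
  have hfz : ∀ z ∈ kAnn e 1, d < ‖f z‖ ∧ ‖f z‖ < 1 / d := by
    intro z hz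
    have h1 : d < ‖f z‖ := by
      by_contra! h
      obtain ⟨y, hy, hyz⟩ := hcov (show f z ∈ ball 0 (k * e) by simpa using h.trans_lt hdk)
      have := hi (ball_subset_ball he1.le hy) (hsub hz) hyz
      subst this
      have h3 := hz.1
      rw [mem_ball_zero_iff] at hy
      linarith
    refine ⟨h1, ?_⟩
    by_contra! h
    have hf0' : f z ≠ 0 := norm_pos_iff.1 (hd0.trans h1)
    have h2 : ‖(f z)⁻¹‖ ≤ d := by
      rw [norm_inv]
      apply inv_le_of_inv_le₀ hd0
      simpa using h
    obtain ⟨y, hy, hyz⟩ := hcov (show (f z)⁻¹ ∈ ball 0 (k * e) by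
      simpa only [mem_ball_zero_iff] using h2.trans_lt hdk)
    exact hne z (hsub hz) y (ball_subset_ball he1.le hy) (by rw [hyz, mul_inv_cancel₀ hf0'])
  have hfne : ∀ z ∈ kAnn e 1, f z ≠ 0 := fun z hz => norm_pos_iff.1 (hd0.trans (hfz z hz).1)
  have hA := kAnn_open e 1
  have hfA := hf.mono hsub
  have hiA := hi.mono hsub
  have hgA : DifferentiableOn ℂ (fun z => (f z)⁻¹) (kAnn e 1) := hfA.inv hfne
  have hgi : InjOn (fun z => (f z)⁻¹) (kAnn e 1) := by
    intro x hx y hy hxy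
    exact hiA hx hy (inv_injective hxy)
  have a1 := k_area hA hfA hiA
  have a2 := k_area hA hgA hgi
  have a3 : ∫⁻ z in kAnn e 1, ENNReal.ofReal (‖deriv (fun z => (f z)⁻¹) z / (f z)⁻¹‖ ^ 2) =
      ∫⁻ z in kAnn e 1, ENNReal.ofReal (‖deriv f z / f z‖ ^ 2) := by
    apply setLIntegral_congr_fun hA.measurableSet
    intro z hz
    simp only
    have hdz : HasDerivAt f (deriv f z) z :=
      ((hfA z hz).differentiableAt (hA.mem_nhds hz)).hasDerivAt
    have h0 := hfne z hz
    rw [(hdz.fun_inv h0).deriv]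
    congr 2
    rw [← norm_neg (deriv f z / f z)]
    congr 1
    field_simp
  rw [a3] at a2
  have hlow := k_lower hf hi h' hf0 he he1
  have hmeas : MeasurableSet ((fun z => (f z)⁻¹) '' kAnn e 1) := by
    have : (fun z => (f z)⁻¹) '' kAnn e 1 = (fun z => z⁻¹) ⁻¹' (f '' kAnn e 1) := by
      ext x
      constructor
      · rintro ⟨y, hy, rfl⟩
        exact ⟨y, hy, by simp⟩
      · rintro ⟨y, hy, hyx⟩
        exact ⟨y, hy, by simp [hyx]⟩
    rw [this]
    exact measurable_inv (k_open hf hi hA hsub).measurableSet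
  have hdisj : Disjoint (f '' kAnn e 1) ((fun z => (f z)⁻¹) '' kAnn e 1) := by
    rw [Set.disjoint_left]
    rintro _ ⟨x, hx, rfl⟩ ⟨y, hy, hxy⟩
    apply hne x (hsub hx) y (hsub hy)
    simp only at hxy
    rw [← hxy, inv_mul_cancel₀ (hfne y hy)]
  have hun : f '' kAnn e 1 ∪ (fun z => (f z)⁻¹) '' kAnn e 1 ⊆ kAnn d (1 / d) := by
    rintro _ (⟨x, hx, rfl⟩ | ⟨x, hx, rfl⟩)
    · exact hfz x hx
    · obtain ⟨h1, h2⟩ := hfz x hx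
      have hp := hd0.trans h1
      simp only [kAnn, mem_ofPred_eq, norm_inv, one_div] at h2 ⊢
      exact ⟨(lt_inv_comm₀ hd0 hp).2 h2, (inv_lt_inv₀ hp hd0).2 h1⟩
  have htot := lintegral_mono_set (μ := volume) (f := fun z : ℂ => ENNReal.ofReal (1 / ‖z‖ ^ 2)) hun
  have hdd : d ≤ 1 / d := hd1.le.trans (by rw [le_div_iff₀ hd0]; linarith)
  rw [lintegral_union hmeas hdisj, a1, a2, k_annArea hd0 hdd] at htot
  have hfin := (add_le_add hlow hlow).trans htot
  have hl1 : 0 < log (1 / e) := Real.log_pos (by rw [lt_div_iff₀ he]; linarith)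
  have hpi := Real.pi_pos
  have hl2 : log d < 0 := Real.log_neg hd0 hd1
  have hl3 : log e < log d := Real.log_lt_log he hed
  have e1 : log (1 / d / d) = - 2 * log d := by
    rw [Real.log_div (by positivity) hd0.ne', one_div, Real.log_inv]; ring
  have e2 : log (1 / e) = - log e := by rw [one_div, Real.log_inv]
  rw [← ENNReal.ofReal_add (by positivity) (by positivity),
    ENNReal.ofReal_le_ofReal_iff (by rw [e1]; nlinarith), e1, e2] at hfin
  nlinarith

lemma k_sqrt {g : ℂ → ℂ} (hg : DifferentiableOn ℂ g (ball (0 : ℂ) 1))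
    (hne : ∀ z ∈ ball (0:ℂ) 1, g z ≠ 0) (hg0 : g 0 = 1) :
    ∃ q : ℂ → ℂ, DifferentiableOn ℂ q (ball 0 1) ∧ q 0 = 1 ∧ ∀ z ∈ ball (0:ℂ) 1, q z ^ 2 = g z := by
  have h0 : (0:ℂ) ∈ ball (0:ℂ) 1 := by simp
  obtain ⟨p, hp⟩ := ((hg.deriv isOpen_ball).div hg hne).isExactOn_ball
  have hpd : DifferentiableOn ℂ p (ball 0 1) := fun z hz =>
    (hp z hz).differentiableAt.differentiableWithinAt
  have hconst : ∀ z ∈ ball (0:ℂ) 1, g z * Complex.exp (-(p z - p 0)) = 1 := by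
    intro z hz
    have hd : ∀ z ∈ ball (0:ℂ) 1,
        HasDerivAt (fun z => g z * Complex.exp (-(p z - p 0))) 0 z := by
      intro z hz
      have h1 := ((hg z hz).differentiableAt (isOpen_ball.mem_nhds hz)).hasDerivAt
      have h2 := (((hp z hz).sub_const (p 0)).fun_neg).cexp
      refine (h1.fun_mul h2).congr_deriv ?_
      have := hne z hz
      simp only [Pi.div_apply]
      field_simp
      ring
    have := isOpen_ball.is_const_of_deriv_eq_zero (convex_ball (0:ℂ) 1).isPreconnected
      (fun z hz => (hd z hz).differentiableAt.differentiableWithinAt)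
      (fun z hz => (hd z hz).deriv) hz h0
    simpa [hg0] using this
  refine ⟨fun z => Complex.exp ((p z - p 0) / 2), ((hpd.sub_const _).div_const _).cexp,
    by simp, fun z hz => ?_⟩
  rw [← Complex.exp_nat_mul]
  have := hconst z hz
  rw [Complex.exp_neg] at this
  have he := Complex.exp_ne_zero (p z - p 0)
  field_simp at this
  rw [this]
  congr 1
  push_cast
  ring

lemma k_quarter {f : ℂ → ℂ} (hf : DifferentiableOn ℂ f (ball (0 : ℂ) 1))
    (hi : InjOn f (ball 0 1)) {y : ℂ} (hy : y ∉ f '' ball 0 1) :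
    ‖deriv f 0‖ ≤ 4 * dist (f 0) y := by
  have h0 : (0:ℂ) ∈ ball (0:ℂ) 1 := by simp
  have hyw : y - f 0 ≠ 0 := fun h => hy ⟨0, h0, (sub_eq_zero.1 h).symm⟩
  set g : ℂ → ℂ := fun z => 1 - (f z - f 0) / (y - f 0) with hg
  have hgd : DifferentiableOn ℂ g (ball 0 1) := ((hf.sub_const _).div_const _).const_sub _
  have hgne : ∀ z ∈ ball (0:ℂ) 1, g z ≠ 0 := by
    intro z hz h
    simp only [hg] at h
    field_simp at h
    apply hy
    exact ⟨z, hz, by linear_combination -h⟩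
  have hgi : ∀ z ∈ ball (0:ℂ) 1, ∀ x ∈ ball (0:ℂ) 1, g z = g x → z = x := by
    intro z hz x hx h
    apply hi hz hx
    simp only [hg] at h
    field_simp at h
    linear_combination -h
  obtain ⟨q, hqd, hq0, hq⟩ := k_sqrt hgd hgne (by simp [hg])
  have hqne : ∀ z ∈ ball (0:ℂ) 1, ∀ x ∈ ball (0:ℂ) 1, q z + q x ≠ 0 := by
    intro z hz x hx h
    have e : q z = - q x := by linear_combination h
    have : z = x := hgi z hz x hx (by rw [← hq z hz, ← hq x hx, e]; ring)
    subst this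
    have : q z = 0 := by linear_combination h / 2
    apply hgne z hz
    rw [← hq z hz, this]; ring
  have hq1 : ∀ z ∈ ball (0:ℂ) 1, 1 + q z ≠ 0 := by
    intro z hz
    have := hqne 0 h0 z hz
    rwa [hq0] at this
  have hq' : HasDerivAt q (deriv q 0) 0 :=
    ((hqd 0 h0).differentiableAt (isOpen_ball.mem_nhds h0)).hasDerivAt
  have hf' : HasDerivAt f (deriv f 0) 0 :=
    ((hf 0 h0).differentiableAt (isOpen_ball.mem_nhds h0)).hasDerivAt
  have hder : 2 * deriv q 0 = - (deriv f 0 / (y - f 0)) := by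
    have h1 : HasDerivAt g (2 * deriv q 0) 0 := by
      have := hq'.fun_pow 2
      simp only [hq0] at this
      refine (this.congr_of_eventuallyEq ?_).congr_deriv (by simp)
      filter_upwards [isOpen_ball.mem_nhds h0] with z hz
      exact (hq z hz).symm
    have h2 : HasDerivAt g (- (deriv f 0 / (y - f 0))) 0 :=
      ((hf'.sub_const _).div_const _).const_sub _
    exact h1.unique h2
  have hphi : HasDerivAt (fun z => (1 - q z) / (1 + q z)) (- deriv q 0 / 2) 0 := by
    refine ((hq'.const_sub 1).fun_div (hq'.const_add 1) (hq1 0 h0)).congr_deriv ?_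
    rw [hq0]; ring
  have hmain := k_main (f := fun z => (1 - q z) / (1 + q z))
    ((hqd.const_sub 1).fun_div (hqd.const_add 1) hq1)
    (by
      intro z hz x hx h
      have h1 := hq1 z hz
      have h2 := hq1 x hx
      simp only at h
      rw [div_eq_div_iff h1 h2] at h
      have e : q z = q x := by linear_combination -h / 2
      exact hgi z hz x hx (by rw [← hq z hz, ← hq x hx, e]))
    (by simp [hq0])
    (by
      intro z hz x hx h
      have h1 := hq1 z hz
      have h2 := hq1 x hx
      rw [div_mul_div_comm, div_eq_one_iff_eq (mul_ne_zero h1 h2)] at h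
      exact hqne z hz x hx (by linear_combination -h / 2))
  rw [hphi.deriv] at hmain
  have e : deriv f 0 = 4 * (- deriv q 0 / 2) * (y - f 0) := by
    field_simp at hder
    linear_combination hder
  rw [e, norm_mul, norm_mul, dist_comm, dist_eq_norm, Complex.norm_ofNat]
  have := norm_nonneg (y - f 0)
  gcongr
  linarith

lemma k_dist {f : ℂ → ℂ} (hf : DifferentiableOn ℂ f (ball (0 : ℂ) 1))
    (hi : InjOn f (ball 0 1)) (h' : deriv f 0 ≠ 0) {t : ℝ} (ht : 0 < t)
    (hsub : closedBall (f 0) t ⊆ f '' ball 0 1) : t ≤ ‖deriv f 0‖ := by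
  obtain ⟨hh, hne⟩ := k_h hf hi h'
  obtain ⟨r, hr⟩ : ∃ r : Ioo (0:ℝ) 1, closedBall (f 0) t ⊆ f '' ball 0 r := by
    haveI : Nonempty (Ioo (0:ℝ) 1) := ⟨⟨1/2, by norm_num, by norm_num⟩⟩
    apply (isCompact_closedBall (f 0) t).elim_directed_cover
    · intro i
      exact k_open hf hi isOpen_ball (ball_subset_ball i.2.2.le)
    · intro x hx
      obtain ⟨z, hz, rfl⟩ := hsub hx
      rw [mem_ball_zero_iff] at hz
      obtain ⟨s, hs1, hs2⟩ := exists_between hz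
      exact mem_iUnion.2 ⟨⟨s, (norm_nonneg z).trans_lt hs1, hs2⟩, z, by simpa using hs1, rfl⟩
    · apply Monotone.directed_le
      intro a b hab
      exact image_mono (ball_subset_ball hab)
  obtain ⟨r, hr0, hr1⟩ := r
  simp only at hr
  have hs : closedBall (0:ℂ) r ⊆ ball 0 1 := closedBall_subset_ball hr1
  have hb := Complex.norm_le_of_forall_mem_frontier_norm_le (f := fun z => (dslope f 0 z)⁻¹)
    (U := ball 0 r) (C := t⁻¹) isBounded_ball
    (DifferentiableOn.diffContOnCl
      ((hh.fun_inv hne).mono (closure_ball_subset_closedBall.trans hs)))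
    (by
      intro z hz
      rw [frontier_ball _ hr0.ne', mem_sphere_zero_iff_norm] at hz
      have hz0 : z ≠ 0 := by
        rintro rfl
        rw [norm_zero] at hz; linarith
      have hzb : z ∈ ball (0:ℂ) 1 := by simpa [hz] using hr1
      rw [norm_inv]
      apply inv_anti₀ ht
      have h1 : t < ‖f z - f 0‖ := by
        by_contra! hc
        obtain ⟨x, hx, hxz⟩ := hr (show f z ∈ closedBall (f 0) t by
          rw [mem_closedBall, dist_eq_norm]; exact hc)
        have := hi (ball_subset_ball hr1.le hx) hzb hxz
        subst this
        rw [mem_ball_zero_iff] at hx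
        linarith
      rw [dslope_of_ne _ hz0, slope_def_field, sub_zero, norm_div, hz, le_div_iff₀ hr0]
      nlinarith)
    (z := 0) (subset_closure (by simpa using hr0))
  simp only [dslope_same, norm_inv] at hb
  exact (inv_le_inv₀ (norm_pos_iff.2 h') ht).1 hb

end Koebe

/-- For a nonempty proper open simply connected domain `D ⊊ ℂ`, a point
`w ∈ D`, and a conformal (holomorphic bijective) map `f : 𝔻 → D` with `f 0 = w` and
`f' 0 = c > 0` (so `c = CR(w, D)` is the conformal radius), we have
`dist(w, ∂D) ≤ c ≤ min (4 dist(w, ∂D)) (rad(w, D))`. -/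
theorem cle_gasket_stmt_0
    (D : Set ℂ) (hD_open : IsOpen D) (hD_ne : D.Nonempty) (hD_proper : D ≠ Set.univ)
    (hD_sc : SimplyConnectedSpace D)
    (w : ℂ) (hw : w ∈ D)
    (f : ℂ → ℂ) (hf_holo : DifferentiableOn ℂ f (ball (0 : ℂ) 1))
    (hf_bij : BijOn f (ball (0 : ℂ) 1) D)
    (hf0 : f 0 = w)
    (c : ℝ) (hc : 0 < c) (hf'0 : deriv f 0 = (c : ℂ)) :
    Metric.infDist w Dᶜ ≤ c ∧
    c ≤ 4 * Metric.infDist w Dᶜ ∧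
    ∀ r : ℝ, 0 < r → D ⊆ ball w r → c ≤ r := by
  have hn : ‖deriv f 0‖ = c := by
    rw [hf'0, Complex.norm_real, Real.norm_of_nonneg hc.le]
  have hd0 : deriv f 0 ≠ 0 := by
    rw [hf'0]; exact_mod_cast hc.ne'
  have him := hf_bij.image_eq
  have hcne : (Dᶜ).Nonempty := nonempty_compl.2 hD_proper
  refine ⟨?_, ?_, ?_⟩
  · apply le_of_forall_lt
    intro t ht
    obtain ⟨s, hs1, hs2⟩ := exists_between (max_lt ht
      ((hD_open.isClosed_compl.notMem_iff_infDist_pos hcne).1 (by simpa using hw)))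
    refine (lt_of_le_of_lt (le_max_left t 0) hs1).trans_le ?_
    rw [← hn]
    apply k_dist hf_holo hf_bij.injOn hd0 (lt_of_le_of_lt (le_max_right t 0) hs1)
    rw [him, hf0]
    exact (closedBall_subset_ball hs2).trans ball_infDist_compl_subset
  · have : c / 4 ≤ infDist w Dᶜ := by
      rw [le_infDist hcne]
      intro y hy
      have := k_quarter hf_holo hf_bij.injOn (y := y) (by rw [him]; exact hy)
      rw [hn, hf0] at this
      linarith
    linarith
  · intro r hr hDr
    have := Complex.norm_deriv_le_div_of_mapsTo_ball hf_holo (R₂ := r) (by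
      intro z hz
      rw [hf0]
      exact ball_subset_closedBall (hDr (hf_bij.mapsTo hz))) one_pos
    rwa [hn, div_one] at this
end

section
/- Let U be an open simply connected subset of the open unit disc 𝔻 with 0 ∈ U, let g : U → 𝔻 be a holomorphic bijection with g(0) = 0 and g'(0) > 0, and write g'(0) = e^{t} (necessarily t ≥ 0). Then the closed disc {ζ : |ζ| ≤ e^{−t}/8} is contained in U, and the image g({ζ : |ζ| ≤ e^{−t}/8}) contains the closed disc {w : |w| ≤ 1/32}. -/
open Metric Set MeasureTheory

lemma kb_polar (a b : ℝ) (ha : 0 < a) (F : ℂ → ENNReal) (hF : Measurable F) :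
    ∫⁻ z in {z : ℂ | a < ‖z‖ ∧ ‖z‖ < b}, F z =
      ∫⁻ s in Ioo a b, ∫⁻ θ in Ioo (-Real.pi) Real.pi,
        ENNReal.ofReal s * F (circleMap 0 s θ) := by
  have hA : MeasurableSet {z : ℂ | a < ‖z‖ ∧ ‖z‖ < b} :=
    (measurableSet_lt measurable_const measurable_norm).inter
      (measurableSet_lt measurable_norm measurable_const)
  have hm : Measurable (fun p : ℝ × ℝ => circleMap 0 p.1 p.2) := by
    unfold circleMap; fun_prop
  have hsym : ∀ p : ℝ × ℝ, Complex.polarCoord.symm p = circleMap 0 p.1 p.2 := by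
    intro p
    rw [Complex.polarCoord_symm_apply, circleMap, Complex.exp_mul_I]; simp
  rw [← lintegral_indicator hA, ← Complex.lintegral_comp_polarCoord_symm]
  have h2 : ∀ p ∈ polarCoord.target, ENNReal.ofReal p.1 •
      ({z : ℂ | a < ‖z‖ ∧ ‖z‖ < b}.indicator F (Complex.polarCoord.symm p)) =
      (Ioo a b ×ˢ Ioo (-Real.pi) Real.pi).indicator
        (fun p : ℝ × ℝ => ENNReal.ofReal p.1 * F (circleMap 0 p.1 p.2)) p := by
    intro p hp
    have h0 : 0 < p.1 ∧ p.2 ∈ Ioo (-Real.pi) Real.pi := hp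
    rw [hsym]
    by_cases h : a < p.1 ∧ p.1 < b
    · rw [indicator_of_mem, indicator_of_mem, smul_eq_mul]
      · exact ⟨h, h0.2⟩
      · simpa [abs_of_pos h0.1] using h
    · rw [indicator_of_notMem, indicator_of_notMem, smul_zero]
      · exact fun h' => h h'.1
      · simpa [abs_of_pos h0.1] using h
  rw [setLIntegral_congr_fun polarCoord.open_target.measurableSet h2,
    lintegral_indicator (measurableSet_Ioo.prod measurableSet_Ioo), Measure.restrict_restrict
      (measurableSet_Ioo.prod measurableSet_Ioo)]
  have : Ioo a b ×ˢ Ioo (-Real.pi) Real.pi ∩ polarCoord.target =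
      Ioo a b ×ˢ Ioo (-Real.pi) Real.pi := by
    apply inter_eq_left.2
    rintro p ⟨h1, h2⟩
    exact ⟨ha.trans h1.1, h2⟩
  rw [this, Measure.volume_eq_prod, setLIntegral_prod]
  apply Measurable.aemeasurable
  fun_prop

lemma kb_log (a b : ℝ) (ha : 0 < a) (hab : a ≤ b) :
    ∫⁻ s in Ioo a b, ENNReal.ofReal (2 * Real.pi / s) =
      ENNReal.ofReal (2 * Real.pi * Real.log (b / a)) := by
  have hi : IntervalIntegrable (fun s : ℝ => 2 * Real.pi / s) volume a b := by
    apply ContinuousOn.intervalIntegrable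
    apply ContinuousOn.div continuousOn_const continuousOn_id
    intro x hx
    rw [uIcc_of_le hab] at hx
    exact (ha.trans_le hx.1).ne'
  have hi' := (intervalIntegrable_iff_integrableOn_Ioo_of_le hab).1 hi
  rw [← ofReal_integral_eq_lintegral_ofReal hi']
  · congr 1
    rw [← integral_Ioc_eq_integral_Ioo, ← intervalIntegral.integral_of_le hab]
    simp_rw [div_eq_mul_inv]
    rw [intervalIntegral.integral_const_mul, integral_inv_of_pos ha (ha.trans_le hab), div_eq_mul_inv]
  · filter_upwards [ae_restrict_mem measurableSet_Ioo] with s hs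
    have := ha.trans hs.1
    have := Real.pi_pos
    simp only [Pi.zero_apply]
    positivity

lemma kb_upper (a b : ℝ) (ha : 0 < a) (hab : a ≤ b) :
    ∫⁻ z in {z : ℂ | a < ‖z‖ ∧ ‖z‖ < b}, ENNReal.ofReal ((‖z‖ ^ 2)⁻¹) =
      ENNReal.ofReal (2 * Real.pi * Real.log (b / a)) := by
  rw [kb_polar a b ha _ (by fun_prop), ← kb_log a b ha hab]
  apply setLIntegral_congr_fun measurableSet_Ioo
  intro s hs
  have hs0 : 0 < s := ha.trans hs.1
  simp only [norm_circleMap_zero, sq_abs, lintegral_const, Measure.restrict_apply_univ, Real.volume_Ioo]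
  rw [← ENNReal.ofReal_mul hs0.le, ← ENNReal.ofReal_mul (by positivity)]
  congr 1
  field_simp
  ring

lemma kb_circle (ψ : ℂ → ℂ) (s : ℝ) (hs : 0 < s) (hψ : DifferentiableOn ℂ ψ (ball 0 1))
    (hs1 : s < 1) (h0 : ψ 0 = 1) :
    ENNReal.ofReal (2 * Real.pi) ≤ ∫⁻ θ in Ioo (-Real.pi) Real.pi,
        ENNReal.ofReal (‖ψ (circleMap 0 s θ)‖ ^ 2) := by
  have hπ := Real.pi_pos
  have hcl : closedBall (0:ℂ) s ⊆ ball 0 1 := closedBall_subset_ball hs1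
  have hc : Continuous (fun θ => ψ (circleMap 0 s θ)) := by
    apply hψ.continuousOn.comp_continuous (continuous_circleMap 0 s)
    intro θ
    simp [abs_of_pos hs, hs1]
  have hav : Real.circleAverage ψ 0 s = 1 := by
    rw [← h0]
    apply DiffContOnCl.circleAverage
    rw [abs_of_pos hs]
    apply DifferentiableOn.diffContOnCl
    exact hψ.mono ((closure_ball_subset_closedBall).trans hcl)
  rw [Real.circleAverage_eq_integral_add (-Real.pi)] at hav
  have hint : ∫ θ in (-Real.pi)..Real.pi, ψ (circleMap 0 s θ) = 2 * Real.pi := by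
    have h1 := intervalIntegral.integral_comp_add_right (a := 0) (b := 2 * Real.pi)
      (fun θ => ψ (circleMap 0 s θ)) (-Real.pi)
    rw [h1] at hav
    have e1 : (0:ℝ) + -Real.pi = -Real.pi := by ring
    have e2 : 2 * Real.pi + -Real.pi = Real.pi := by ring
    rw [e1, e2, inv_smul_eq_iff₀ (by positivity)] at hav
    rw [hav]; simp
  have hre : ∫ θ in (-Real.pi)..Real.pi, (ψ (circleMap 0 s θ)).re = 2 * Real.pi := by
    have h2 := (Complex.reCLM).intervalIntegral_comp_comm (hc.intervalIntegrable (μ := volume) (-Real.pi) Real.pi)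
    simp only [Complex.reCLM_apply] at h2
    rw [h2, hint]; simp
  have hn : Continuous (fun θ => ‖ψ (circleMap 0 s θ)‖ ^ 2) := hc.norm.pow 2
  rw [← ofReal_integral_eq_lintegral_ofReal]
  · apply ENNReal.ofReal_le_ofReal
    rw [← integral_Ioc_eq_integral_Ioo, ← intervalIntegral.integral_of_le (by linarith)]
    have hcr : Continuous (fun θ => (ψ (circleMap 0 s θ)).re) :=
      Complex.continuous_re.comp hc
    have : ∫ θ in (-Real.pi)..Real.pi, (2 * (ψ (circleMap 0 s θ)).re - 1) = 2 * Real.pi := by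
      rw [intervalIntegral.integral_sub ((hcr.const_mul 2 |>.intervalIntegrable _ _)) (by simp),
        intervalIntegral.integral_const_mul, hre]
      simp; ring
    rw [← this]
    apply intervalIntegral.integral_mono (by linarith)
    · exact (Continuous.intervalIntegrable (by fun_prop) _ _)
    · exact hn.intervalIntegrable _ _
    · intro θ
      simp only
      rw [Complex.sq_norm, Complex.normSq_apply]
      nlinarith [sq_nonneg ((ψ (circleMap 0 s θ)).re - 1), sq_nonneg (ψ (circleMap 0 s θ)).im]
  · exact (hn.integrableOn_Icc).mono_set Ioo_subset_Icc_self
  · exact Filter.Eventually.of_forall fun θ => by positivity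

lemma kb_cov (f f' : ℂ → ℂ) (s : Set ℂ) (hs : MeasurableSet s)
    (hf : ∀ x ∈ s, HasDerivAt f (f' x) x) (hi : InjOn f s) (G : ℂ → ENNReal) :
    ∫⁻ x in f '' s, G x = ∫⁻ x in s, ENNReal.ofReal (‖f' x‖ ^ 2) * G (f x) := by
  have h := lintegral_image_eq_lintegral_abs_det_fderiv_mul volume (s := s) (f := f)
    (f' := fun x => ((ContinuousLinearMap.toSpanSingleton ℂ (f' x)).restrictScalars ℝ)) hs
    (fun x hx => ((hf x hx).hasFDerivAt.restrictScalars ℝ).hasFDerivWithinAt) hi G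
  rw [h]
  congr 1
  ext x
  congr 2
  rw [ContinuousLinearMap.det]
  have : ((ContinuousLinearMap.toSpanSingleton ℂ (f' x)).restrictScalars ℝ : ℂ →ₗ[ℝ] ℂ) =
    ((ContinuousLinearMap.toSpanSingleton ℂ (f' x) : ℂ →ₗ[ℂ] ℂ)).restrictScalars ℝ := rfl
  rw [this, LinearMap.det_restrictScalars]
  have h2 := ContinuousLinearMap.det_toSpanSingleton (f' x)
  rw [ContinuousLinearMap.det] at h2
  rw [h2, Algebra.norm_complex_apply, Complex.normSq_eq_norm_sq]
  simp


lemma kb_main (q : ℂ → ℂ) (hq : DifferentiableOn ℂ q (ball 0 1)) (hi : InjOn q (ball 0 1))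
    (h0 : q 0 = 0) (hinv : ∀ z ∈ ball (0:ℂ) 1, ∀ w ∈ ball (0:ℂ) 1, q z * q w ≠ 1) :
    ‖deriv q 0‖ ≤ 1 := by
  by_contra hcon
  push Not at hcon
  have hπ := Real.pi_pos
  have hmem0 : (0:ℂ) ∈ ball (0:ℂ) 1 := by simp
  -- k = q / z
  set k := dslope q 0 with hk
  have hkd : DifferentiableOn ℂ k (ball 0 1) :=
    (Complex.differentiableOn_dslope (ball_mem_nhds 0 one_pos)).2 hq
  have hqk : ∀ z, q z = z * k z := by
    intro z
    have := sub_smul_dslope q 0 z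
    simp [h0] at this
    exact this.symm
  have hk0 : k 0 = deriv q 0 := dslope_same q 0
  have hqne : ∀ z ∈ ball (0:ℂ) 1, z ≠ 0 → q z ≠ 0 := by
    intro z hz hz0 h
    exact hz0 (hi hz hmem0 (h.trans h0.symm))
  have hkne : ∀ z ∈ ball (0:ℂ) 1, k z ≠ 0 := by
    intro z hz h
    by_cases hz0 : z = 0
    · rw [hz0, hk0] at h
      rw [h] at hcon; simp at hcon; linarith
    · exact hqne z hz hz0 (by rw [hqk, h, mul_zero])
  set ψ : ℂ → ℂ := fun z => 1 + z * deriv k z / k z with hψdef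
  have hψ : DifferentiableOn ℂ ψ (ball 0 1) := by
    apply (differentiableOn_const _).add
    exact (differentiableOn_id.mul (hkd.deriv isOpen_ball)).div hkd hkne
  have hψ0 : ψ 0 = 1 := by simp [hψdef]
  have hqψ : ∀ z ∈ ball (0:ℂ) 1, z ≠ 0 → deriv q z = ψ z * q z / z := by
    intro z hz hz0
    have h1 : HasDerivAt k (deriv k z) z :=
      (hkd.differentiableAt (isOpen_ball.mem_nhds hz)).hasDerivAt
    have h2 : HasDerivAt q (1 * k z + z * deriv k z) z := by
      have := (hasDerivAt_id z).mul h1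
      refine this.congr_of_eventuallyEq (Filter.Eventually.of_forall ?_)
      intro w; simp [hqk]
    rw [h2.deriv, hqk z]
    have := hkne z hz
    simp only [hψdef]
    field_simp
  -- choose parameters
  set a := ‖deriv q 0‖ with ha
  obtain ⟨a', ha'1, ha'a⟩ := exists_between hcon
  obtain ⟨ρ, hρ1, hρ2⟩ : ∃ ρ, 1 / a' < ρ ∧ ρ < 1 :=
    exists_between (by rw [div_lt_one (by linarith)]; exact ha'1)
  have ha'0 : 0 < a' := by linarith
  have hρ0 : 0 < ρ := lt_trans (by positivity) hρ1
  have hclρ : closedBall (0:ℂ) ρ ⊆ ball 0 1 := closedBall_subset_ball hρ2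
  obtain ⟨s, hs0, hs⟩ : ∃ s > 0, ∀ z : ℂ, ‖z‖ < s → a' < ‖k z‖ := by
    have hc : ContinuousAt (fun z => ‖k z‖) 0 :=
      (hkd.continuousOn.continuousAt (isOpen_ball.mem_nhds hmem0)).norm
    have : ∀ᶠ z in nhds (0:ℂ), a' < ‖k z‖ := hc.eventually_const_lt (by simp only [hk0]; exact ha'a)
    obtain ⟨s, hs, h⟩ := Metric.eventually_nhds_iff.1 this
    exact ⟨s, hs, fun z hz => h (by simpa using hz)⟩
  obtain ⟨M, hM⟩ : ∃ M, ∀ z ∈ closedBall (0:ℂ) ρ, ‖q z‖ ≤ M :=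
    (isCompact_closedBall 0 ρ).exists_bound_of_continuousOn (hq.continuousOn.mono hclρ)
  obtain ⟨η, hη0, hη⟩ : ∃ η > 0, ∀ z ∈ closedBall (0:ℂ) ρ, s ≤ ‖z‖ → η ≤ ‖q z‖ := by
    have hkc : ContinuousOn (fun z => ‖k z‖⁻¹) (closedBall (0:ℂ) ρ) :=
      ((hkd.continuousOn.mono hclρ).norm).inv₀ (fun z hz => norm_ne_zero_iff.2 (hkne z (hclρ hz)))
    obtain ⟨C, hC⟩ := (isCompact_closedBall (0:ℂ) ρ).exists_bound_of_continuousOn hkc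
    have hC' : 0 < max C 1 := by positivity
    refine ⟨s / max C 1, by positivity, fun z hz hsz => ?_⟩
    have h1 := (hC z hz).trans (le_max_left C 1)
    rw [norm_inv, norm_norm] at h1
    have hkp : 0 < ‖k z‖ := norm_pos_iff.2 (hkne z (hclρ hz))
    have h2 : (max C 1)⁻¹ ≤ ‖k z‖ := by
      rw [inv_le_comm₀ hC' hkp]; exact h1
    rw [hqk, norm_mul, div_eq_mul_inv]
    gcongr
  -- r
  obtain ⟨r, hr0, hr⟩ : ∃ r, 0 < r ∧ r < min (min ρ (η / a')) (min (1 / a') (1 / (a' * (|M| + 1)))) :=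
    exists_between (by positivity)
  simp only [lt_min_iff] at hr
  obtain ⟨⟨hrρ, hrη⟩, hr1, hrM⟩ := hr
  set m := a' * r with hm
  have hm0 : 0 < m := by positivity
  have hm1 : m < 1 := by rw [lt_div_iff₀ ha'0] at hr1; linarith
  have hmη : m < η := by rw [lt_div_iff₀ ha'0] at hrη; linarith
  have hmM : M < 1 / m := by
    rw [lt_div_iff₀ (by positivity)] at hrM
    rw [lt_div_iff₀ hm0]
    nlinarith [le_abs_self M]
  set A : Set ℂ := {z : ℂ | r < ‖z‖ ∧ ‖z‖ < ρ} with hA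
  have hAo : IsOpen A := (isOpen_lt continuous_const continuous_norm).inter
    (isOpen_lt continuous_norm continuous_const)
  have hAb : A ⊆ ball 0 1 := fun z hz => hclρ (by simpa using hz.2.le)
  have hA0 : ∀ z ∈ A, z ≠ 0 := fun z hz h => by
    have := hz.1; rw [h, norm_zero] at this; linarith
  set E := q '' A with hE
  set R : Set ℂ := {z : ℂ | m < ‖z‖ ∧ ‖z‖ < 1 / m} with hR
  have hER : E ⊆ R := by
    rintro _ ⟨z, hz, rfl⟩
    have hz' : z ∈ closedBall (0:ℂ) ρ := by simpa using hz.2.le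
    refine ⟨?_, (hM z hz').trans_lt hmM⟩
    by_cases h : ‖z‖ < s
    · rw [hqk, norm_mul, hm, mul_comm]
      exact mul_lt_mul'' hz.1 (hs z h) hr0.le ha'0.le
    · exact hmη.trans_le (hη z hz' (not_lt.1 h))
  have hE0 : ∀ w ∈ E, w ≠ 0 := by
    rintro w hw rfl
    have := (hER hw).1
    simp at this; linarith
  set E' := (fun w : ℂ => w⁻¹) '' E with hE'
  have hE'R : E' ⊆ R := by
    rintro _ ⟨w, hw, rfl⟩
    have h := hER hw
    have hwp : 0 < ‖w‖ := norm_pos_iff.2 (hE0 w hw)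
    constructor
    · rw [norm_inv, lt_inv_comm₀ hm0 hwp, ← one_div]; exact h.2
    · rw [norm_inv, one_div, inv_lt_inv₀ hwp hm0]; exact h.1
  have hdisj : Disjoint E E' := by
    rw [Set.disjoint_left]
    rintro _ ⟨z, hz, rfl⟩ ⟨_, ⟨w, hw, rfl⟩, h⟩
    refine hinv z (hAb hz) w (hAb hw) ?_
    rw [← h]
    exact inv_mul_cancel₀ (hqne w (hAb hw) (hA0 w hw))
  have hqd : ∀ z ∈ A, HasDerivAt q (deriv q z) z := fun z hz =>
    (hq.differentiableAt (isOpen_ball.mem_nhds (hAb hz))).hasDerivAt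
  have hEm : MeasurableSet E :=
    measurable_image_of_fderivWithin hAo.measurableSet
      (fun z hz => ((hqd z hz).hasFDerivAt.restrictScalars ℝ).hasFDerivWithinAt) (hi.mono hAb)
  have hE'm : MeasurableSet E' := by
    have : E' = (fun w : ℂ => w⁻¹) ⁻¹' E := by
      ext w; constructor
      · rintro ⟨v, hv, rfl⟩; simpa using hv
      · intro h; exact ⟨w⁻¹, h, inv_inv w⟩
    rw [this]
    exact measurable_inv hEm
  set G : ℂ → ENNReal := fun z => ENNReal.ofReal ((‖z‖ ^ 2)⁻¹) with hG
  have hEE' : ∫⁻ w in E', G w = ∫⁻ w in E, G w := by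
    rw [hE', kb_cov (fun w => w⁻¹) (fun w => -(w ^ 2)⁻¹) E hEm
      (fun w hw => hasDerivAt_inv (hE0 w hw)) (inv_injective.injOn)]
    apply setLIntegral_congr_fun hEm
    intro w hw
    have hwp : 0 < ‖w‖ := norm_pos_iff.2 (hE0 w hw)
    simp only [hG]
    rw [← ENNReal.ofReal_mul (by positivity)]
    congr 1
    simp only [norm_neg, norm_inv, norm_pow]
    field_simp
  have hup : 2 * ∫⁻ w in E, G w ≤ ENNReal.ofReal (2 * Real.pi * Real.log ((1 / m) / m)) := by
    rw [← kb_upper m (1 / m) hm0 (by rw [le_div_iff₀ hm0]; nlinarith), two_mul]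
    nth_rewrite 2 [← hEE']
    rw [← lintegral_union hE'm hdisj]
    exact lintegral_mono_set (union_subset hER hE'R)
  have hlow : ENNReal.ofReal (2 * Real.pi * Real.log (ρ / r)) ≤ ∫⁻ w in E, G w := by
    rw [hE, kb_cov q (deriv q) A hAo.measurableSet hqd (hi.mono hAb)]
    set F : ℂ → ENNReal := A.piecewise (fun z => ENNReal.ofReal (‖ψ z‖ ^ 2 / ‖z‖ ^ 2)) 0 with hF
    have hFm : Measurable F := by
      apply ContinuousOn.measurable_piecewise _ continuousOn_const hAo.measurableSet
      apply ENNReal.continuous_ofReal.comp_continuousOn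
      apply ((hψ.continuousOn.mono hAb).norm.pow 2).div (by fun_prop)
      intro z hz
      have := norm_ne_zero_iff.2 (hA0 z hz)
      positivity
    have e : ∫⁻ z in A, ENNReal.ofReal (‖deriv q z‖ ^ 2) * G (q z) = ∫⁻ z in A, F z := by
      apply setLIntegral_congr_fun hAo.measurableSet
      intro z hz
      simp only [hF, Set.piecewise_eq_of_mem _ _ _ hz, hG]
      rw [← ENNReal.ofReal_mul (by positivity), hqψ z (hAb hz) (hA0 z hz)]
      congr 1
      have h1 := norm_ne_zero_iff.2 (hA0 z hz)
      have h2 := norm_ne_zero_iff.2 (hqne z (hAb hz) (hA0 z hz))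
      rw [norm_div, norm_mul]
      field_simp
    rw [e, hA, kb_polar r ρ hr0 F hFm, ← kb_log r ρ hr0 hrρ.le]
    apply setLIntegral_mono' measurableSet_Ioo
    intro x hx
    have hx0 : 0 < x := hr0.trans hx.1
    have h1 : ∀ θ : ℝ, ENNReal.ofReal x * F (circleMap 0 x θ) =
        ENNReal.ofReal (1 / x) * ENNReal.ofReal (‖ψ (circleMap 0 x θ)‖ ^ 2) := by
      intro θ
      have hmem : circleMap 0 x θ ∈ A := by
        simpa [hA, abs_of_pos hx0] using hx
      simp only [hF, Set.piecewise_eq_of_mem _ _ _ hmem]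
      rw [← ENNReal.ofReal_mul (by positivity), ← ENNReal.ofReal_mul (by positivity)]
      congr 1
      rw [norm_circleMap_zero, sq_abs]
      field_simp
    simp_rw [h1]
    rw [lintegral_const_mul' _ _ ENNReal.ofReal_ne_top]
    refine le_trans ?_ (mul_le_mul_right (kb_circle ψ x hx0 hψ (hx.2.trans hρ2) hψ0) _)
    rw [← ENNReal.ofReal_mul (by positivity)]
    apply ENNReal.ofReal_le_ofReal
    apply le_of_eq
    ring
  have hfin : ENNReal.ofReal (2 * (2 * Real.pi * Real.log (ρ / r))) ≤
      ENNReal.ofReal (2 * Real.pi * Real.log ((1 / m) / m)) := by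
    rw [ENNReal.ofReal_mul (by norm_num)]
    refine le_trans ?_ hup
    simpa using mul_le_mul_right hlow 2
  have hlogm : 0 ≤ Real.log ((1 / m) / m) := by
    apply Real.log_nonneg
    rw [le_div_iff₀ hm0, le_div_iff₀ hm0]; nlinarith
  rw [ENNReal.ofReal_le_ofReal_iff (by positivity)] at hfin
  have e1 : Real.log ((1 / m) / m) = - 2 * Real.log m := by
    rw [div_div, one_div, Real.log_inv, Real.log_mul hm0.ne' hm0.ne']; ring
  rw [e1, hm, Real.log_mul ha'0.ne' hr0.ne', Real.log_div hρ0.ne' hr0.ne'] at hfin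
  have h3 : Real.log a' + Real.log ρ ≤ 0 := by
    by_contra h
    push Not at h
    nlinarith
  rw [← Real.log_mul ha'0.ne' hρ0.ne'] at h3
  have h4 : 1 < a' * ρ := by rw [div_lt_iff₀ ha'0] at hρ1; linarith
  exact absurd (Real.log_pos h4) (not_lt.2 h3)

lemma kb_koebe (h : ℂ → ℂ) (hd : DifferentiableOn ℂ h (ball 0 1)) (hi : InjOn h (ball 0 1))
    (h0 : h 0 = 0) (c : ℂ) (hc : ∀ z ∈ ball (0:ℂ) 1, h z ≠ c) :
    ‖deriv h 0‖ ≤ 4 * ‖c‖ := by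
  have hmem0 : (0:ℂ) ∈ ball (0:ℂ) 1 := by simp
  have hc0 : c ≠ 0 := fun e => hc 0 hmem0 (h0.trans e.symm)
  set u : ℂ → ℂ := fun z => 1 - h z / c with hu
  have hud : DifferentiableOn ℂ u (ball 0 1) := (differentiableOn_const _).sub (hd.div_const c)
  have hune : ∀ z ∈ ball (0:ℂ) 1, u z ≠ 0 := by
    intro z hz e
    apply hc z hz
    simp only [hu] at e
    field_simp at e
    linear_combination -e
  have hui : InjOn u (ball 0 1) := by
    intro z hz w hw e
    apply hi hz hw
    simp only [hu] at e
    field_simp at e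
    linear_combination -e
  have hu0 : u 0 = 1 := by simp [hu, h0]
  have hex : ∃ H : ℂ → ℂ, H 0 = 0 ∧ ∀ z ∈ ball (0:ℂ) 1, HasDerivAt H (deriv u z / u z) z := by
    have hh : DifferentiableOn ℂ (fun z => deriv u z / u z) (ball 0 1) :=
      (hud.deriv isOpen_ball).div hud hune
    obtain ⟨H, hH⟩ := hh.isExactOn_ball
    refine ⟨fun z => H z - H 0, by simp, fun z hz => (hH z hz).sub_const _⟩
  obtain ⟨H, hH0, hH⟩ := hex
  have hexp : ∀ z ∈ ball (0:ℂ) 1, u z = Complex.exp (H z) := by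
    have hder : ∀ z ∈ ball (0:ℂ) 1, HasDerivAt (fun z => u z * Complex.exp (-H z)) 0 z := by
      intro z hz
      have h1 := (hud.differentiableAt (isOpen_ball.mem_nhds hz)).hasDerivAt
      have h2 := h1.mul ((hH z hz).neg.cexp)
      have := hune z hz
      have e0 : deriv u z * Complex.exp ((-H) z) +
          u z * (Complex.exp ((-H) z) * -(deriv u z / u z)) = 0 := by
        field_simp
        ring
      rw [e0] at h2
      exact h2
    have := fun (x y : ℂ) => isOpen_ball.is_const_of_deriv_eq_zero (x := x) (y := y) (convex_ball (0:ℂ) 1).isPreconnected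
      (f := fun z => u z * Complex.exp (-H z))
      (fun z hz => (hder z hz).differentiableAt.differentiableWithinAt)
      (fun z hz => (hder z hz).deriv)
    intro z hz
    have h3 := this _ _ hz hmem0
    simp only [hH0, hu0, neg_zero, Complex.exp_zero, mul_one, Complex.exp_neg] at h3
    have := Complex.exp_ne_zero (H z)
    field_simp at h3
    exact h3
  set p : ℂ → ℂ := fun z => Complex.exp (H z / 2) with hp
  have hpp : ∀ z ∈ ball (0:ℂ) 1, p z * p z = u z := by
    intro z hz
    rw [hexp z hz, hp, ← Complex.exp_add]; congr 1; ring
  have hp0 : p 0 = 1 := by simp [hp, hH0]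
  have hpne : ∀ z, p z ≠ 0 := fun z => Complex.exp_ne_zero _
  have hpd : ∀ z ∈ ball (0:ℂ) 1, HasDerivAt p (p z * (deriv u z / u z / 2)) z := fun z hz =>
    ((hH z hz).div_const 2).cexp
  have hpneg : ∀ z ∈ ball (0:ℂ) 1, ∀ w ∈ ball (0:ℂ) 1, p z + p w ≠ 0 := by
    intro z hz w hw e
    have e1 : p z = - p w := by linear_combination e
    have : z = w := hui hz hw (by rw [← hpp z hz, ← hpp w hw, e1]; ring)
    subst this
    apply hpne z
    linear_combination e / 2
  have hp1 : ∀ z ∈ ball (0:ℂ) 1, p z + 1 ≠ 0 := by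
    intro z hz
    have := hpneg z hz 0 hmem0
    rwa [hp0] at this
  set q : ℂ → ℂ := fun z => (p z - 1) / (p z + 1) with hq
  have hqd : ∀ z ∈ ball (0:ℂ) 1, HasDerivAt q
      ((p z * (deriv u z / u z / 2) * (p z + 1) - (p z - 1) * (p z * (deriv u z / u z / 2)))
        / (p z + 1) ^ 2) z := fun z hz =>
    ((hpd z hz).sub_const 1).div ((hpd z hz).add_const 1) (hp1 z hz)
  have hmain := kb_main q (fun z hz => (hqd z hz).differentiableAt.differentiableWithinAt)
    (by
      intro z hz w hw e
      apply hui hz hw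
      have h1 := hp1 z hz
      have h2 := hp1 w hw
      simp only [hq] at e
      rw [div_eq_div_iff h1 h2] at e
      have : p z = p w := by linear_combination e / 2
      rw [← hpp z hz, ← hpp w hw, this])
    (by simp [hq, hp0])
    (by
      intro z hz w hw e
      have h1 := hp1 z hz
      have h2 := hp1 w hw
      simp only [hq] at e
      rw [div_mul_div_comm, div_eq_one_iff_eq (mul_ne_zero h1 h2)] at e
      exact hpneg z hz w hw (by linear_combination -e / 2))
  have hdu : deriv u 0 = - (deriv h 0 / c) := by
    have h1 := (hd.differentiableAt (isOpen_ball.mem_nhds hmem0)).hasDerivAt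
    exact ((h1.div_const c).const_sub 1).deriv
  rw [(hqd 0 hmem0).deriv, hp0, hu0, hdu] at hmain
  have e : (1 * (-(deriv h 0 / c) / 1 / 2) * (1 + 1) - (1 - 1) * (1 * (-(deriv h 0 / c) / 1 / 2))) / (1 + 1) ^ 2
      = - (deriv h 0 / (4 * c)) := by
    field_simp; ring
  rw [e, norm_neg, norm_div, norm_mul, div_le_one (by simpa using hc0)] at hmain
  simpa using hmain

/-- Koebe quarter theorem on a disc of radius `R`. -/
lemma kb_koebe_R (h : ℂ → ℂ) (R : ℝ) (hR : 0 < R) (hd : DifferentiableOn ℂ h (ball 0 R))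
    (hi : InjOn h (ball 0 R)) (h0 : h 0 = 0) :
    ball 0 (R * ‖deriv h 0‖ / 4) ⊆ h '' ball 0 R := by
  intro c hc
  by_contra hcon
  have hmap : ∀ z ∈ ball (0:ℂ) 1, (R:ℂ) * z ∈ ball (0:ℂ) R := by
    intro z hz
    simp only [mem_ball_zero_iff, norm_mul, Complex.norm_real, Real.norm_eq_abs, abs_of_pos hR] at *
    nlinarith
  have hRc : (R:ℂ) ≠ 0 := by exact_mod_cast hR.ne'
  have hk := kb_koebe (fun z => h (R * z))
    (hd.comp ((differentiable_id.const_mul (R:ℂ)).differentiableOn) hmap)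
    (fun z hz w hw e => mul_left_cancel₀ hRc (hi (hmap z hz) (hmap w hw) e))
    (by simp [h0]) c (fun z hz e => hcon ⟨_, hmap z hz, e⟩)
  rw [deriv_comp_mul_left (R:ℂ) h 0] at hk
  simp only [mul_zero, norm_smul, Complex.norm_real, Real.norm_eq_abs, abs_of_pos hR] at hk
  simp only [mem_ball_zero_iff] at hc
  linarith

theorem cle_gasket_stmt_14
    (U : Set ℂ) (hU_open : IsOpen U) (hU_sub : U ⊆ ball (0 : ℂ) 1)
    (hU_sc : SimplyConnectedSpace U) (h0 : (0 : ℂ) ∈ U)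
    (g : ℂ → ℂ) (hg_holo : DifferentiableOn ℂ g U)
    (hg_bij : BijOn g U (ball (0 : ℂ) 1))
    (hg0 : g 0 = 0)
    (t : ℝ) (hg'0 : deriv g 0 = ((Real.exp t : ℝ) : ℂ)) :
    0 ≤ t ∧
    closedBall (0 : ℂ) (Real.exp (-t) / 8) ⊆ U ∧
    closedBall (0 : ℂ) (1 / 32) ⊆ g '' closedBall (0 : ℂ) (Real.exp (-t) / 8) := by
  have hmem0 : (0:ℂ) ∈ ball (0:ℂ) 1 := by simp
  have het := Real.exp_pos (-t)
  set f := Function.invFunOn g U with hf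
  have hinv : InvOn f g U (ball 0 1) := hg_bij.invOn_invFunOn
  have hfm : MapsTo f (ball 0 1) U := hg_bij.surjOn.mapsTo_invFunOn
  have hf0 : f 0 = 0 := by
    have := hinv.1 h0
    rwa [hg0] at this
  have hgan : AnalyticOnNhd ℂ g U := hg_holo.analyticOnNhd hU_open
  have hpre : IsPreconnected U := by
    have : PreconnectedSpace U := inferInstance
    exact isPreconnected_iff_preconnectedSpace.2 this
  have hopen : ∀ s ⊆ U, IsOpen s → IsOpen (g '' s) := by
    rcases hgan.is_constant_or_isOpen hpre with ⟨w, hw⟩ | h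
    · exfalso
      have hh : (1/2 : ℂ) ∈ ball (0:ℂ) 1 := by
        rw [mem_ball_zero_iff]; norm_num
      obtain ⟨z, hz, hz2⟩ := hg_bij.surjOn hh
      rw [hw z hz, ← hw 0 h0, hg0] at hz2
      norm_num at hz2
    · exact h
  have hfc : ∀ w ∈ ball (0:ℂ) 1, ContinuousAt f w := by
    intro w hw
    rw [ContinuousAt, Filter.tendsto_def]
    intro N hN
    obtain ⟨V, hVN, hVo, hVw⟩ := _root_.mem_nhds_iff.1 hN
    have h1 : IsOpen (g '' (V ∩ U)) := hopen _ inter_subset_right (hVo.inter hU_open)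
    refine Filter.mem_of_superset (h1.mem_nhds ⟨f w, ⟨hVw, hfm hw⟩, hinv.2 hw⟩) ?_
    rintro _ ⟨z, ⟨hzV, hzU⟩, rfl⟩
    rw [mem_preimage, hinv.1 hzU]
    exact hVN hzV
  have hgd : ∀ z ∈ U, HasDerivAt g (deriv g z) z := fun z hz =>
    (hgan z hz).differentiableAt.hasDerivAt
  have hfloc : ∀ w ∈ ball (0:ℂ) 1, deriv g (f w) ≠ 0 → HasDerivAt f (deriv g (f w))⁻¹ w := by
    intro w hw hne
    refine HasDerivAt.of_local_left_inverse (hfc w hw) (hgd _ (hfm hw)) hne ?_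
    filter_upwards [isOpen_ball.mem_nhds hw] with v hv
    exact hinv.2 hv
  have hfd : DifferentiableOn ℂ f (ball 0 1) := by
    intro w hw
    apply DifferentiableAt.differentiableWithinAt
    apply AnalyticAt.differentiableAt
    apply Complex.analyticAt_of_differentiable_on_punctured_nhds_of_continuousAt _ (hfc w hw)
    have hz := hfm hw
    rcases (hgan _ hz).deriv.eventually_eq_zero_or_eventually_ne_zero with h | h
    · exfalso
      obtain ⟨ε, hε, hb⟩ := Metric.eventually_nhds_iff_ball.1 (h.and (hU_open.mem_nhds hz))
      have hconst := fun (x y : ℂ) => isOpen_ball.is_const_of_deriv_eq_zero (x := x) (y := y) (convex_ball (f w) ε).isPreconnected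
        (f := g) (fun z hz => (hgd z (hb z hz).2).differentiableAt.differentiableWithinAt)
        (fun z hz => (hb z hz).1)
      have hmem : f w + (ε / 2 : ℝ) ∈ ball (f w) ε := by
        rw [mem_ball, dist_eq_norm, add_sub_cancel_left, Complex.norm_real, Real.norm_eq_abs,
          abs_of_pos (by positivity)]
        linarith
      have h2 := hg_bij.injOn (hb _ hmem).2 hz (hconst _ _ hmem (mem_ball_self hε))
      have h3 : ((ε / 2 : ℝ) : ℂ) = 0 := by linear_combination h2
      have h4 : ε / 2 = 0 := by exact_mod_cast h3
      linarith
    · have hmem : ∀ᶠ v in nhdsWithin w {w}ᶜ, v ∈ ball (0:ℂ) 1 :=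
        nhdsWithin_le_nhds (isOpen_ball.mem_nhds hw)
      have htend : Filter.Tendsto f (nhdsWithin w {w}ᶜ) (nhdsWithin (f w) {f w}ᶜ) := by
        apply tendsto_nhdsWithin_of_tendsto_nhds_of_eventually_within
        · exact (hfc w hw).mono_left nhdsWithin_le_nhds
        · filter_upwards [hmem, self_mem_nhdsWithin] with v hv hvw e
          apply hvw
          have e' : f v = f w := e
          have := congrArg g e'
          rwa [hinv.2 hv, hinv.2 hw] at this
      filter_upwards [hmem, htend.eventually h] with v hv hv2
      exact (hfloc v hv hv2).differentiableAt
  have hf' : deriv f 0 = ((Real.exp (-t) : ℝ) : ℂ) := by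
    have h1 := hfloc 0 hmem0
    rw [hf0, hg'0] at h1
    rw [(h1 (by exact_mod_cast (Real.exp_pos t).ne')).deriv, Real.exp_neg]
    push_cast; rfl
  have hnf : ‖deriv f 0‖ = Real.exp (-t) := by
    rw [hf', Complex.norm_real, Real.norm_eq_abs, abs_of_pos het]
  have hsub : closedBall (0 : ℂ) (Real.exp (-t) / 8) ⊆ U := by
    have hk := kb_koebe_R f 1 one_pos hfd hinv.2.injOn hf0
    rw [hnf] at hk
    refine (closedBall_subset_ball (by linarith)).trans (hk.trans ?_)
    exact hfm.image_subset
  refine ⟨?_, hsub, ?_⟩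
  · have h1 : ‖deriv f 0‖ ≤ 1 := by
      apply Complex.norm_deriv_le_one_of_mapsTo_ball (R := 1) hfd _ one_pos
      rw [hf0]
      exact fun z hz => ball_subset_closedBall (hU_sub (hfm hz))
    rw [hnf, Real.exp_le_one_iff] at h1
    linarith
  · have hb : ball (0:ℂ) (Real.exp (-t) / 8) ⊆ U := ball_subset_closedBall.trans hsub
    have hk := kb_koebe_R g (Real.exp (-t) / 8) (by positivity) (hg_holo.mono hb)
      (hg_bij.injOn.mono hb) hg0
    have e : Real.exp (-t) / 8 * ‖deriv g 0‖ / 4 = 1 / 32 := by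
      rw [hg'0, Complex.norm_real, Real.norm_eq_abs, abs_of_pos (Real.exp_pos t), Real.exp_neg]
      have := Real.exp_pos t
      field_simp
      norm_num
    rw [e] at hk
    have hcl : IsClosed (g '' closedBall (0:ℂ) (Real.exp (-t) / 8)) :=
      ((isCompact_closedBall _ _).image_of_continuousOn (hg_holo.continuousOn.mono hsub)).isClosed
    rw [← closure_ball (0:ℂ) (by norm_num : (1/32 : ℝ) ≠ 0)]
    exact closure_minimal (hk.trans (image_mono ball_subset_closedBall)) hcl
end
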